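/- arXiv:2510.05786 — 2 statements merged into one kernel-verified Lean document; each statement's English description precedes it below -/
import Mathlib

section
/- Let G = (V,E) be a DAMG, R a commutative ring, ς : E → R an edge weight function with total path weight function σ, and τ : Rt(G) → R a root weight function extended to τ : V → R. Then for every horizontal subset X ⊆ V of G and every y ∈ Desc(X) := ∪_{x ∈ X} Desc(x), we have τ(y) = Σ_{x ∈ X} τ(x) · σ(x,y). In particular, taking X = Rt(G), we have τ(y) = Σ_{r ∈ Rt(G)} τ(r) · σ(r,y) for every y ∈ V. -/
open scoped Classical

/-- A directed multigraph: finite sets of vertices/edges with tail and head maps. -/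
structure MGraph (V E : Type*) where
  tl : E → V
  hd : E → V

namespace MGraph

variable {V E R A : Type*}

/-- `G` is a directed acyclic multigraph (DAMG) if it admits a topological ordering,
i.e. a linear (injective) order on the vertices such that tails precede heads. -/
def IsDAMG (G : MGraph V E) : Prop :=
  ∃ ord : V → ℕ, Function.Injective ord ∧ ∀ e : E, ord (G.tl e) < ord (G.hd e)

/-- `G.IsPath x y l` : the list of edges `l` is a directed path from `x` to `y`. -/
def IsPath (G : MGraph V E) : V → V → List E → Prop
  | x, y, [] => x = y
  | x, y, e :: es => G.tl e = x ∧ G.IsPath (G.hd e) y es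

/-- the set `E(x,y)` of edges from `x` to `y` -/
def edges (G : MGraph V E) (x y : V) : Set E := {e | G.tl e = x ∧ G.hd e = y}

/-- there is a directed path from `x` to `y` (possibly trivial) -/
def Reaches (G : MGraph V E) (x y : V) : Prop := ∃ l : List E, G.IsPath x y l

/-- ancestors of `y` (including `y`) -/
def anc (G : MGraph V E) (y : V) : Set V := {x | G.Reaches x y}

/-- descendants of `x` (including `x`) -/
def desc (G : MGraph V E) (x : V) : Set V := {y | G.Reaches x y}

/-- parents of `y` -/
def pa (G : MGraph V E) (y : V) : Set V := {x | ∃ e : E, G.tl e = x ∧ G.hd e = y}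

/-- roots (sources) of `G` -/
def roots (G : MGraph V E) : Set V := {x | G.pa x = ∅}

/-- leaves (sinks) of `G` -/
def leaves (G : MGraph V E) : Set V := {x | ∀ e : E, G.tl e ≠ x}

/-- `π(x,y)` : the number of directed paths from `x` to `y` -/
noncomputable def nPaths (G : MGraph V E) (x y : V) : ℕ :=
  {l : List E | G.IsPath x y l}.ncard

/-- `π(y)` : the number of directed paths from roots to `y` -/
noncomputable def nPathsRt (G : MGraph V E) (y : V) : ℕ :=
  ∑ᶠ r ∈ G.roots, G.nPaths r y

/-- pairwise weight `q(x|y) := Σ_{e ∈ E(x,y)} q(e)` -/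
noncomputable def pw [AddCommMonoid R] (G : MGraph V E) (q : E → R) (x y : V) : R :=
  ∑ᶠ e ∈ G.edges x y, q e

/-- a weight function is normalized if pairwise weights into any non-root sum to 1 -/
def Normalized [CommRing R] (G : MGraph V E) (q : E → R) : Prop :=
  ∀ y : V, y ∉ G.roots → (∑ᶠ x : V, G.pw q x y) = 1

/-- `w` is the Möbius transform (synergy function) of `v` w.r.t. `G` -/
def IsMoebiusTransform [AddCommGroup A] (G : MGraph V E) (v w : V → A) : Prop :=
  ∀ x : V, w x = v x - ∑ᶠ y ∈ G.anc x \ {x}, w y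

/-- `μ` is the Möbius function of `G` -/
def IsMoebiusFunction (G : MGraph V E) (μ : V → V → ℤ) : Prop :=
  (∀ x y : V, x ∉ G.anc y → μ x y = 0) ∧
  (∀ x : V, μ x x = 1) ∧
  (∀ x y : V, x ∈ G.anc y → x ≠ y →
    μ x y = -(∑ᶠ z ∈ (G.desc x ∩ G.anc y) \ {y}, μ x z))

/-- `s` is the total path weight function of the edge weight function `q` -/
def IsTotalWeight [CommRing R] (G : MGraph V E) (q : E → R) (s : V → V → R) : Prop :=
  (∀ x y : V, y ∉ G.desc x → s x y = 0) ∧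
  (∀ x : V, s x x = 1) ∧
  (∀ x y : V, y ∈ G.desc x → y ≠ x → s x y = ∑ᶠ z ∈ G.pa y, s x z * G.pw q z y)

/-- `τ : V → R` is the extension of a root weight function via the recursion
`τ(y) = Σ_{z ∈ Pa(y)} τ(z)·ς(z,y)` for non-roots `y` -/
def IsRootExtension [CommRing R] (G : MGraph V E) (ς : E → R) (τ : V → R) : Prop :=
  ∀ y : V, y ∉ G.roots → τ y = ∑ᶠ z ∈ G.pa y, τ z * G.pw ς z y

/-- the list of vertices visited by a path starting at `x` -/
def pathVerts (G : MGraph V E) (x : V) (l : List E) : List V := x :: l.map G.hd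

/-- `X` is a horizontal subset of `G` : every directed path from a root to a leaf
contains exactly one element of `X` -/
def Horizontal (G : MGraph V E) (X : Set V) : Prop :=
  ∀ r ∈ G.roots, ∀ lf ∈ G.leaves, ∀ p : List E, G.IsPath r lf p →
    (G.pathVerts r p).countP (fun v => decide (v ∈ X)) = 1

/-- the path uniform weight function `q_G(e) := π(t(e))/π(h(e))` -/
noncomputable def pathUniform (G : MGraph V E) : E → ℚ :=
  fun e => (G.nPathsRt (G.tl e) : ℚ) / (G.nPathsRt (G.hd e) : ℚ)

/-- the unanimity value function centred at `y` -/
noncomputable def zeta [CommRing R] (G : MGraph V E) (y : V) : V → R :=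
  fun x => if x ∈ G.desc y then (1 : R) else 0

/-! ### Projection onto the complement of a single element -/

/-- the edge type of the projection `G^{∖z}` :
old edges avoiding `z`, together with a new edge for every pair of edges through `z` -/
def proj1E (G : MGraph V E) (z : V) : Type _ :=
  {e : E // G.tl e ≠ z ∧ G.hd e ≠ z} ⊕
  {p : E × E // G.hd p.1 = z ∧ G.tl p.2 = z ∧ G.tl p.1 ≠ z ∧ G.hd p.2 ≠ z}

/-- the projection `G^{∖z}` of `G` onto the complement of `z` -/
def proj1 (G : MGraph V E) (z : V) : MGraph {x : V // x ≠ z} (G.proj1E z) where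
  tl := Sum.elim (fun e => ⟨G.tl e.1, e.2.1⟩) (fun p => ⟨G.tl p.1.1, p.2.2.2.1⟩)
  hd := Sum.elim (fun e => ⟨G.hd e.1, e.2.2⟩) (fun p => ⟨G.hd p.1.2, p.2.2.2.2⟩)

/-- the projected weight function `q^{∖z}` -/
def proj1Q [CommRing R] (G : MGraph V E) (z : V) (q : E → R) : G.proj1E z → R :=
  Sum.elim (fun e => q e.1) (fun p => q p.1.1 * q p.1.2)

/-- the single-element projection `w^{∖z}(x) := w(x) + q(x|z)·w(z)` of a synergy function -/
noncomputable def wProjOne [CommRing R] [AddCommGroup A] [Module R A]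
    (G : MGraph V E) (q : E → R) (w : V → A) (z : V) : {x : V // x ≠ z} → A :=
  fun x => w x.1 + G.pw q x.1 z • w z

/-! ### Projection onto the complement of a subset -/

/-- consecutive edges of the list compose -/
def IsChain (G : MGraph V E) : List E → Prop
  | [] => True
  | [_] => True
  | e :: e' :: es => G.hd e = G.tl e' ∧ G.IsChain (e' :: es)

/-- the interior vertices of a path (all visited vertices except the endpoints) -/
def interior (G : MGraph V E) : List E → List V
  | [] => []
  | [_] => []
  | e :: e' :: es => G.hd e :: G.interior (e' :: es)

/-- an edge of the projection `G^{∖S}` : a nonempty directed path of `G` whose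
interior vertices lie in `S` and whose endpoints lie outside `S`
(iterating `E^{∖z}(x,y) := E(x,y) ⊔ (E(x,z) × E(z,y))` over the elements of `S`) -/
structure ProjEdge (G : MGraph V E) (S : Set V) where
  first : E
  rest : List E
  chain : G.IsChain (first :: rest)
  tl_notin : G.tl first ∉ S
  hd_notin : G.hd ((first :: rest).getLast (List.cons_ne_nil _ _)) ∉ S
  interior_mem : ∀ v ∈ G.interior (first :: rest), v ∈ S

/-- the projection `G^{∖S}` of `G` onto the complement of the subset `S` -/
def projG (G : MGraph V E) (S : Set V) : MGraph {x : V // x ∉ S} (G.ProjEdge S) where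
  tl := fun p => ⟨G.tl p.first, p.tl_notin⟩
  hd := fun p => ⟨G.hd ((p.first :: p.rest).getLast (List.cons_ne_nil _ _)), p.hd_notin⟩

/-- the projected weight function `q^{∖S}` (weights multiply along collapsed paths) -/
def projQ [CommRing R] (G : MGraph V E) (S : Set V) (q : E → R) :
    G.ProjEdge S → R :=
  fun p => ((p.first :: p.rest).map q).prod

/-! ### Iterated one-element projections of pairwise weights and synergy functions -/

/-- one projection step on pairwise weights: `q^{∖z}(x|y) = q(x|y) + q(x|z)·q(z|y)` -/
def pwStep [CommRing R] (Q : V → V → R) (z : V) : V → V → R :=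
  fun x y => Q x y + Q x z * Q z y

/-- one projection step on a synergy function: `w^{∖z}(x) = w(x) + q(x|z)·w(z)` -/
def wStep [CommRing R] [AddCommGroup A] [Module R A]
    (Q : V → V → R) (w : V → A) (z : V) : V → A :=
  fun x => w x + Q x z • w z

/-- iterated one-element projections along a list of vertices -/
def projIter [CommRing R] [AddCommGroup A] [Module R A] :
    List V → (V → V → R) → (V → A) → ((V → V → R) × (V → A))
  | [], Q, w => (Q, w)
  | z :: zs, Q, w => projIter zs (pwStep Q z) (wStep Q w z)

/-! ### Subgraph on a subset of vertices -/

/-- edges of `G` with both endpoints in `S` -/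
def subE (G : MGraph V E) (S : Set V) : Type _ := {e : E // G.tl e ∈ S ∧ G.hd e ∈ S}

/-- the subgraph of `G` on the vertex subset `S` -/
def subgraph (G : MGraph V E) (S : Set V) : MGraph ↥S (G.subE S) where
  tl := fun e => ⟨G.tl e.1, e.2.1⟩
  hd := fun e => ⟨G.hd e.1, e.2.2⟩

/-- the canonical identification `(V∖{z})∖{u} ≃ (V∖{u})∖{z}` -/
def swapCompl (z u : V) (hzu : z ≠ u) :
    {y : {x : V // x ≠ z} // y ≠ ⟨u, Ne.symm hzu⟩} ≃
      {y : {x : V // x ≠ u} // y ≠ ⟨z, hzu⟩} where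
  toFun y := ⟨⟨y.1.1, fun h => y.2 (Subtype.ext h)⟩, fun h => y.1.2 (congrArg Subtype.val h)⟩
  invFun y := ⟨⟨y.1.1, fun h => y.2 (Subtype.ext h)⟩, fun h => y.1.2 (congrArg Subtype.val h)⟩
  left_inv y := rfl
  right_inv y := rfl

end MGraph

/-!
Both `τ` and `y ↦ ∑ x ∈ X, τ x * σ x y` satisfy the recursion over parents at every vertex outside
`X` that is reached from `X`, and they agree on `X` because no vertex of `X` reaches another. So
they agree on `Desc(X)` by induction along the parent relation, as soon as every parent of a vertex
of `Desc(X) \ X` is again in `Desc(X)`. For horizontal `X` both properties come from extending an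
edge `e` to a path from a root to a leaf: `X` meets either the part of the path up to `t(e)` or the
part from `h(e)` on, but not both.
-/

namespace MGraph

variable {V E R : Type*} {G : MGraph V E} {X : Set V} {x y z v : V} {p q : List E}

theorem IsPath.append : ∀ {p : List E} {x : V}, G.IsPath x y p → G.IsPath y z q →
    G.IsPath x z (p ++ q)
  | [], _, rfl, hq => hq
  | _ :: _, _, ⟨he, hp⟩, hq => ⟨he, hp.append hq⟩

theorem reaches_iff_reflTransGen : G.Reaches x y ↔ Relation.ReflTransGen (· ∈ G.pa ·) x y := by
  constructor
  · rintro ⟨p, hp⟩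
    induction p generalizing x with
    | nil => exact hp ▸ .refl
    | cons e p ih => exact .head ⟨e, hp.1, rfl⟩ (ih hp.2)
  · intro h
    induction h using Relation.ReflTransGen.head_induction_on with
    | refl => exact ⟨[], rfl⟩
    | head hxz _ ih =>
      obtain ⟨e, rfl, rfl⟩ := hxz
      obtain ⟨p, hp⟩ := ih
      exact ⟨e :: p, rfl, hp⟩

theorem Reaches.refl (x : V) : G.Reaches x x := ⟨[], rfl⟩

theorem Reaches.trans (hxy : G.Reaches x y) (hyz : G.Reaches y z) : G.Reaches x z :=
  let ⟨p, hp⟩ := hxy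
  let ⟨q, hq⟩ := hyz
  ⟨p ++ q, hp.append hq⟩

theorem reaches_of_mem_pa (hx : x ∈ G.pa y) : G.Reaches x y :=
  reaches_iff_reflTransGen.2 (.single hx)

theorem Reaches.eq_or_exists_mem_pa (h : G.Reaches x y) :
    x = y ∨ ∃ z ∈ G.pa y, G.Reaches x z := by
  simp only [reaches_iff_reflTransGen] at h ⊢
  exact h.cases_tail.imp Eq.symm fun ⟨z, hxz, hz⟩ => ⟨z, hz, hxz⟩

theorem Reaches.eq_or_exists_edge (h : G.Reaches x y) :
    x = y ∨ ∃ e, G.tl e = x ∧ G.Reaches (G.hd e) y := by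
  obtain ⟨_ | ⟨e, p⟩, hp⟩ := h
  · exact .inl hp
  · exact .inr ⟨e, hp.1, p, hp.2⟩

theorem Reaches.eq_of_mem_roots (h : G.Reaches x y) (hy : y ∈ G.roots) : x = y := by
  refine h.eq_or_exists_mem_pa.resolve_right ?_
  rintro ⟨z, hz, -⟩
  exact Set.eq_empty_iff_forall_notMem.1 hy z hz

theorem IsDAMG.wellFounded_mem_pa (hG : G.IsDAMG) : WellFounded (· ∈ G.pa ·) := by
  obtain ⟨ord, -, hord⟩ := hG
  refine Subrelation.wf ?_ (InvImage.wf ord wellFounded_lt)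
  rintro _ _ ⟨e, rfl, rfl⟩
  exact hord e

theorem exists_root_reaches (hwf : WellFounded (· ∈ G.pa ·)) (y : V) :
    ∃ r ∈ G.roots, G.Reaches r y := by
  induction y using hwf.induction with
  | _ y ih =>
    by_cases hy : y ∈ G.roots
    · exact ⟨y, hy, .refl y⟩
    · obtain ⟨z, hz⟩ := Set.nonempty_iff_ne_empty.2 hy
      obtain ⟨r, hr, hrz⟩ := ih z hz
      exact ⟨r, hr, hrz.trans (reaches_of_mem_pa hz)⟩

theorem IsDAMG.exists_reaches_leaf [Finite V] (hG : G.IsDAMG) (x : V) :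
    ∃ l ∈ G.leaves, G.Reaches x l := by
  obtain ⟨ord, -, hord⟩ := hG
  obtain ⟨l, hxl, hmax⟩ := (G.desc x).toFinite.exists_maximalFor ord _ ⟨x, .refl x⟩
  refine ⟨l, ?_, hxl⟩
  rintro e rfl
  have hhd : G.hd e ∈ G.desc x := Reaches.trans hxl (reaches_of_mem_pa ⟨e, rfl, rfl⟩)
  exact (hmax hhd (hord e).le).not_gt (hord e)

theorem finite_anc (hwf : WellFounded (· ∈ G.pa ·)) (hpa : ∀ y, (G.pa y).Finite) (y : V) :
    (G.anc y).Finite := by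
  induction y using hwf.induction with
  | _ y ih =>
    refine (((hpa y).biUnion ih).insert y).subset fun x hx => ?_
    refine (Reaches.eq_or_exists_mem_pa hx).imp id ?_
    rintro ⟨z, hz, hxz⟩
    exact Set.mem_biUnion hz hxz

theorem pathVerts_append_cons (x : V) (p : List E) (e : E) (q : List E) :
    G.pathVerts x (p ++ e :: q) = G.pathVerts x p ++ G.pathVerts (G.hd e) q := by
  simp only [pathVerts, List.map_append, List.map_cons, List.cons_append]

theorem IsPath.mem_pathVerts_append (hp : G.IsPath x y p) (q : List E) :
    y ∈ G.pathVerts x (p ++ q) := by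
  induction p generalizing x with
  | nil => exact hp ▸ List.mem_cons_self
  | cons e p ih => exact List.mem_cons_of_mem _ (ih hp.2)

theorem IsPath.reaches_of_mem_pathVerts (hp : G.IsPath x y p) (hv : v ∈ G.pathVerts x p) :
    G.Reaches x v ∧ G.Reaches v y := by
  induction p generalizing x with
  | nil =>
    obtain rfl : v = x := List.mem_singleton.1 hv
    exact ⟨.refl v, [], hp⟩
  | cons e p ih =>
    rcases List.mem_cons.1 hv with rfl | hv
    · exact ⟨.refl v, e :: p, hp⟩
    · obtain ⟨hev, hvy⟩ := ih hp.2 hv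
      exact ⟨(reaches_of_mem_pa ⟨e, hp.1, rfl⟩).trans hev, hvy⟩

/-- `G.IsCut X` says that no vertex of `X` reaches another one and that every parent of a vertex
of `Desc(X) \ X` lies in `Desc(X)`. Horizontal subsets and the set of roots are the instances of
interest: these two conditions are what the recursion for `τ` needs, and they do not mention
leaves. -/
structure IsCut (G : MGraph V E) (X : Set V) : Prop where
  isAntichain : IsAntichain G.Reaches X
  exists_reaches_of_mem_pa : ∀ ⦃x y z⦄, x ∈ X → G.Reaches x y → y ∉ X → z ∈ G.pa y →
    ∃ x' ∈ X, G.Reaches x' z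

theorem isCut_roots (hwf : WellFounded (· ∈ G.pa ·)) : G.IsCut G.roots where
  isAntichain _ _ _ hr hne h := hne (h.eq_of_mem_roots hr)
  exists_reaches_of_mem_pa _ _ z _ _ _ _ := exists_root_reaches hwf z

theorem Horizontal.not_reaches_hd (hX : G.Horizontal X)
    (hroot : ∀ v, ∃ r ∈ G.roots, G.Reaches r v) (hleaf : ∀ v, ∃ l ∈ G.leaves, G.Reaches v l)
    {e : E} (hx : x ∈ X) (hxe : G.Reaches x (G.tl e)) (hy : y ∈ X) : ¬ G.Reaches (G.hd e) y := by
  rintro ⟨c, hc⟩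
  obtain ⟨b, hb⟩ := hxe
  obtain ⟨r, hr, a, ha⟩ := hroot x
  obtain ⟨l, hl, d, hd⟩ := hleaf y
  have hpath : G.IsPath r l ((a ++ b) ++ e :: (c ++ d)) :=
    (ha.append hb).append ⟨rfl, hc.append hd⟩
  have hcount := hX r hr l hl _ hpath
  rw [pathVerts_append_cons, List.countP_append] at hcount
  have hbefore : 0 < (G.pathVerts r (a ++ b)).countP (fun v => decide (v ∈ X)) :=
    List.countP_pos_iff.2 ⟨x, ha.mem_pathVerts_append b, decide_eq_true hx⟩
  have hafter : 0 < (G.pathVerts (G.hd e) (c ++ d)).countP (fun v => decide (v ∈ X)) :=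
    List.countP_pos_iff.2 ⟨y, hc.mem_pathVerts_append d, decide_eq_true hy⟩
  omega

theorem Horizontal.exists_reaches_tl_or_hd_reaches (hX : G.Horizontal X)
    (hroot : ∀ v, ∃ r ∈ G.roots, G.Reaches r v) (hleaf : ∀ v, ∃ l ∈ G.leaves, G.Reaches v l)
    (e : E) : (∃ x ∈ X, G.Reaches x (G.tl e)) ∨ ∃ x ∈ X, G.Reaches (G.hd e) x := by
  obtain ⟨r, hr, p, hp⟩ := hroot (G.tl e)
  obtain ⟨l, hl, q, hq⟩ := hleaf (G.hd e)
  have hcount := hX r hr l hl (p ++ e :: q) (hp.append ⟨rfl, hq⟩)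
  obtain ⟨v, hv, hvX⟩ := List.countP_pos_iff.1 (hcount ▸ Nat.one_pos)
  rw [pathVerts_append_cons, List.mem_append] at hv
  exact hv.imp (fun hv => ⟨v, of_decide_eq_true hvX, (hp.reaches_of_mem_pathVerts hv).2⟩)
    fun hv => ⟨v, of_decide_eq_true hvX, (hq.reaches_of_mem_pathVerts hv).1⟩

theorem Horizontal.isCut (hX : G.Horizontal X)
    (hroot : ∀ v, ∃ r ∈ G.roots, G.Reaches r v) (hleaf : ∀ v, ∃ l ∈ G.leaves, G.Reaches v l) :
    G.IsCut X where
  isAntichain x hx y hy hne hxy := by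
    obtain ⟨e, rfl, hey⟩ := hxy.eq_or_exists_edge.resolve_left hne
    exact hX.not_reaches_hd hroot hleaf hx (.refl _) hy hey
  exists_reaches_of_mem_pa x y z hx hxy hy hz := by
    obtain ⟨e, rfl, rfl⟩ := hz
    refine (hX.exists_reaches_tl_or_hd_reaches hroot hleaf e).resolve_right ?_
    rintro ⟨x', hx', hex'⟩
    have hne : x ≠ G.hd e := ne_of_mem_of_not_mem hx hy
    obtain ⟨_, ⟨e', rfl, he'⟩, hxe'⟩ := hxy.eq_or_exists_mem_pa.resolve_left hne
    exact hX.not_reaches_hd hroot hleaf hx hxe' hx' (he' ▸ hex')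

section CommRing

variable [CommRing R] {ς : E → R} {σ : V → V → R} {τ : V → R}

theorem IsTotalWeight.reaches_of_ne_zero (hσ : G.IsTotalWeight ς σ) (h : σ x y ≠ 0) :
    G.Reaches x y :=
  not_imp_comm.1 (hσ.1 x y) h

theorem IsTotalWeight.eq_finsum_pa (hσ : G.IsTotalWeight ς σ) (hne : x ≠ y) :
    σ x y = ∑ᶠ z ∈ G.pa y, σ x z * G.pw ς z y := by
  obtain ⟨hzero, -, hrec⟩ := hσ
  by_cases hxy : G.Reaches x y
  · exact hrec x y hxy hne.symm
  · rw [hzero x y hxy]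
    refine (finsum_mem_eq_zero_of_forall_eq_zero fun z hz => ?_).symm
    rw [hzero x z fun hxz => hxy (hxz.trans (reaches_of_mem_pa hz)), zero_mul]

theorem IsTotalWeight.finsum_mem_eq_of_mem (hσ : G.IsTotalWeight ς σ)
    (hX : IsAntichain G.Reaches X) (τ : V → R) (hy : y ∈ X) :
    ∑ᶠ x ∈ X, τ x * σ x y = τ y :=
  calc ∑ᶠ x ∈ X, τ x * σ x y = ∑ᶠ x ∈ ({y} : Set V), τ x * σ x y :=
        finsum_mem_inter_support_eq' _ _ _ fun _ hx =>
          ⟨fun hxX => hX.eq hxX hy (hσ.reaches_of_ne_zero (right_ne_zero_of_mul hx)),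
            fun h => h ▸ hy⟩
    _ = τ y := by rw [finsum_mem_singleton, hσ.2.1, mul_one]

theorem IsTotalWeight.finsum_mem_eq_finsum_mem_inter_anc (hσ : G.IsTotalWeight ς σ) (X : Set V)
    (τ : V → R) (hzy : G.Reaches z y) :
    ∑ᶠ x ∈ X, τ x * σ x z = ∑ᶠ x ∈ X ∩ G.anc y, τ x * σ x z :=
  finsum_mem_inter_support_eq' _ _ _ fun _ hx =>
    ⟨fun hxX => ⟨hxX, (hσ.reaches_of_ne_zero (right_ne_zero_of_mul hx)).trans hzy⟩, And.left⟩

theorem IsTotalWeight.finsum_mem_eq_finsum_pa (hσ : G.IsTotalWeight ς σ) (τ : V → R)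
    (hanc : (G.anc y).Finite) (hy : y ∉ X) :
    ∑ᶠ x ∈ X, τ x * σ x y = ∑ᶠ z ∈ G.pa y, (∑ᶠ x ∈ X, τ x * σ x z) * G.pw ς z y := by
  have hpa : (G.pa y).Finite := hanc.subset fun _ => reaches_of_mem_pa
  have hXy : (X ∩ G.anc y).Finite := hanc.inter_of_right X
  calc ∑ᶠ x ∈ X, τ x * σ x y
      = ∑ᶠ x ∈ X ∩ G.anc y, τ x * σ x y :=
        hσ.finsum_mem_eq_finsum_mem_inter_anc X τ (.refl y)
    _ = ∑ᶠ x ∈ X ∩ G.anc y, ∑ᶠ z ∈ G.pa y, τ x * σ x z * G.pw ς z y := by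
        refine finsum_mem_congr rfl fun x hx => ?_
        rw [hσ.eq_finsum_pa (ne_of_mem_of_not_mem hx.1 hy), mul_finsum_mem' _ _ hpa]
        simp only [mul_assoc]
    _ = ∑ᶠ z ∈ G.pa y, ∑ᶠ x ∈ X ∩ G.anc y, τ x * σ x z * G.pw ς z y :=
        finsum_mem_comm _ hXy hpa
    _ = ∑ᶠ z ∈ G.pa y, (∑ᶠ x ∈ X, τ x * σ x z) * G.pw ς z y := by
        refine finsum_mem_congr rfl fun z hz => ?_
        rw [hσ.finsum_mem_eq_finsum_mem_inter_anc X τ (reaches_of_mem_pa hz),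
          finsum_mem_mul' _ _ hXy]

theorem IsCut.rootExtension_eq_finsum_mem (hX : G.IsCut X) (hwf : WellFounded (· ∈ G.pa ·))
    (hpa : ∀ y, (G.pa y).Finite) (hσ : G.IsTotalWeight ς σ) (hτ : G.IsRootExtension ς τ)
    (hy : ∃ x ∈ X, G.Reaches x y) : τ y = ∑ᶠ x ∈ X, τ x * σ x y := by
  induction y using hwf.induction with
  | _ y ih =>
    by_cases hyX : y ∈ X
    · exact (hσ.finsum_mem_eq_of_mem hX.isAntichain τ hyX).symm
    obtain ⟨x, hx, hxy⟩ := hy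
    have hroot : y ∉ G.roots := fun hr => hyX (hxy.eq_of_mem_roots hr ▸ hx)
    rw [hτ y hroot, hσ.finsum_mem_eq_finsum_pa τ (finite_anc hwf hpa y) hyX]
    refine finsum_mem_congr rfl fun z hz => ?_
    rw [ih z hz (hX.exists_reaches_of_mem_pa hx hxy hyX hz)]

end CommRing

end MGraph

theorem rootExtension_eq_sum_total_weights_general {V E R : Type*} [CommRing R]
    (G : MGraph V E) (hwf : WellFounded (· ∈ G.pa ·)) (hpa : ∀ y, (G.pa y).Finite)
    (hleaf : ∀ v, ∃ l ∈ G.leaves, G.Reaches v l)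
    (ς : E → R) (σ : V → V → R) (hσ : G.IsTotalWeight ς σ)
    (τ : V → R) (hτ : G.IsRootExtension ς τ) (X : Set V) (hX : G.Horizontal X) :
    (∀ y : V, (∃ x ∈ X, y ∈ G.desc x) → τ y = ∑ᶠ x ∈ X, τ x * σ x y) ∧
    (∀ y : V, τ y = ∑ᶠ r ∈ G.roots, τ r * σ r y) := by
  have hroot := MGraph.exists_root_reaches hwf
  have hXcut : G.IsCut X := hX.isCut hroot hleaf
  have hrootsCut : G.IsCut G.roots := MGraph.isCut_roots hwf
  exact ⟨fun _ hy => hXcut.rootExtension_eq_finsum_mem hwf hpa hσ hτ hy,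
    fun y => hrootsCut.rootExtension_eq_finsum_mem hwf hpa hσ hτ (hroot y)⟩

/-- **Root weight extension via total path weights.**
For an edge weight function `ς` with total path weight function `σ` and a root
weight function extended to `τ : V → R`: for every horizontal subset `X` of `G`
and every `y ∈ Desc(X)` we have `τ(y) = Σ_{x ∈ X} τ(x)·σ(x,y)`;
in particular `τ(y) = Σ_{r ∈ Rt(G)} τ(r)·σ(r,y)` for every `y ∈ V`. -/
theorem rootExtension_eq_sum_total_weights
    {V E R : Type*} [Finite V] [Finite E] [CommRing R]
    (G : MGraph V E) (hG : G.IsDAMG)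
    (ς : E → R) (σ : V → V → R) (hσ : G.IsTotalWeight ς σ)
    (τ : V → R) (hτ : G.IsRootExtension ς τ)
    (X : Set V) (hX : G.Horizontal X) :
    (∀ y : V, (∃ x ∈ X, y ∈ G.desc x) → τ y = ∑ᶠ x ∈ X, τ x * σ x y) ∧
    (∀ y : V, τ y = ∑ᶠ r ∈ G.roots, τ r * σ r y) := by
  exact rootExtension_eq_sum_total_weights_general G hG.wellFounded_mem_pa
    (fun y => (G.pa y).toFinite) hG.exists_reaches_leaf ς σ hσ τ hτ X hX
end

section
/- Let G = (V,E) be a DAMG, R a commutative ring, q : E → R a normalized weight function, A an R-module, v : V → A a value function with Möbius transform w = v', and z ∈ V a fixed element such that z ∉ Rt(G) or w(z) = 0. Then Σ_{x ∈ V∖{z}} w^{∖z}(x) = Σ_{x ∈ V} w(x). -/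
open scoped Classical

/-!
Projecting `z` away hands the share `q(x|z)·w(z)` of its synergy to every other vertex `x`. Since
`q(z|z) = 0`, nothing is lost by leaving out `x = z`, and the shares add up to `(Σ_x q(x|z))·w(z)`.
This is `w(z)` itself: either the weights into `z` sum to `1`, or `w(z) = 0`.
-/

theorem finsum_mem_eq_finsum_of_support_subset {ι M : Type*} [AddCommMonoid M] {f : ι → M}
    {s : Set ι} (hf : f.support ⊆ s) : ∑ᶠ i ∈ s, f i = ∑ᶠ i, f i := by
  rw [← finsum_mem_inter_support, Set.inter_eq_right.2 hf, finsum_mem_support]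

theorem finsum_mem_add_smul_of_support_subset {ι R M : Type*} [Semiring R] [AddCommMonoid M]
    [Module R M] {p : ι → R} {f : ι → M} {s : Set ι} (hf : (s ∩ f.support).Finite)
    (hp : p.HasFiniteSupport) (hps : p.support ⊆ s) (m : M) :
    ∑ᶠ i ∈ s, (f i + p i • m) = ∑ᶠ i ∈ s, f i + (∑ᶠ i, p i) • m := by
  have hpa : (fun i ↦ p i • m).support ⊆ p.support := Function.support_smul_subset_left p _
  calc
    ∑ᶠ i ∈ s, (f i + p i • m)
    _ = ∑ᶠ i ∈ s, f i + ∑ᶠ i ∈ s, p i • m :=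
      finsum_mem_add_distrib' hf ((hp.subset hpa).inter_of_right s)
    _ = ∑ᶠ i ∈ s, f i + ∑ᶠ i, p i • m := by
      rw [finsum_mem_eq_finsum_of_support_subset (hpa.trans hps)]
    _ = ∑ᶠ i ∈ s, f i + (∑ᶠ i, p i) • m := by rw [finsum_smul' hp]

namespace MGraph

variable {V E R : Type*} {G : MGraph V E}

theorem IsDAMG.edges_self (hG : G.IsDAMG) (x : V) : G.edges x x = ∅ := by
  obtain ⟨ord, -, hord⟩ := hG
  refine Set.eq_empty_of_forall_notMem ?_
  rintro e ⟨htl, hhd⟩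
  exact (hord e).ne (by rw [htl, hhd])

theorem IsDAMG.pw_self [AddCommMonoid R] (hG : G.IsDAMG) (q : E → R) (x : V) :
    G.pw q x x = 0 := by
  rw [pw, hG.edges_self, finsum_mem_empty]

theorem hasFiniteSupport_pw [AddCommMonoid R] {q : E → R} {y : V}
    (hq : (G.hd ⁻¹' {y} ∩ q.support).Finite) : (fun x ↦ G.pw q x y).HasFiniteSupport := by
  refine (hq.image G.tl).subset fun x hx ↦ ?_
  obtain ⟨e, ⟨htl, hhd⟩, he⟩ := exists_ne_zero_of_finsum_mem_ne_zero hx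
  exact ⟨e, ⟨hhd, he⟩, htl⟩

end MGraph

theorem proj1_efficiency_general {V E R A : Type*} [Semiring R] [AddCommMonoid A] [Module R A]
    (G : MGraph V E) (q : E → R) (w : V → A) (z : V) (hq : (G.hd ⁻¹' {z} ∩ q.support).Finite)
    (hw : w.HasFiniteSupport) (hloop : G.pw q z z = 0)
    (hsum : (∑ᶠ x : V, G.pw q x z) • w z = w z) :
    ∑ᶠ x ∈ {x : V | x ≠ z}, (w x + G.pw q x z • w z) = ∑ᶠ x : V, w x := by
  have hsupport : (fun x ↦ G.pw q x z).support ⊆ {x | x ≠ z} := by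
    rintro x hx rfl
    exact hx hloop
  calc
    ∑ᶠ x ∈ {x : V | x ≠ z}, (w x + G.pw q x z • w z)
    _ = ∑ᶠ x ∈ {x : V | x ≠ z}, w x + (∑ᶠ x : V, G.pw q x z) • w z :=
      finsum_mem_add_smul_of_support_subset (hw.inter_of_right _)
        (MGraph.hasFiniteSupport_pw hq) hsupport (w z)
    _ = w z + ∑ᶠ x ∈ {x : V | x ≠ z}, w x := by rw [hsum, add_comm]
    _ = ∑ᶠ x : V, w x := add_finsum_cond_ne z hw

/-- **Efficiency is stable under projection.**
Let `q` be a normalized weight function on the DAMG `G`, `w` the Möbius transform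
of `v`, and `z ∈ V` with `z ∉ Rt(G)` or `w(z) = 0` (weak element). Then
`Σ_{x ∈ V∖{z}} w^{∖z}(x) = Σ_{x ∈ V} w(x)`, where `w^{∖z}(x) = w(x) + q(x|z)·w(z)`. -/
theorem proj1_efficiency
    {V E R A : Type*} [Finite V] [Finite E] [CommRing R] [AddCommGroup A] [Module R A]
    (G : MGraph V E) (hG : G.IsDAMG)
    (q : E → R) (hq : G.Normalized q)
    (v w : V → A) (hw : G.IsMoebiusTransform v w)
    (z : V) (hz : z ∉ G.roots ∨ w z = 0) :
    (∑ᶠ x ∈ {x : V | x ≠ z}, (w x + G.pw q x z • w z)) = ∑ᶠ x : V, w x :=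
  proj1_efficiency_general G q w z (Set.toFinite _) (Set.toFinite _) (hG.pw_self q z)
    (hz.elim (fun hroot ↦ by rw [hq z hroot, one_smul]) (fun hweak ↦ by rw [hweak, smul_zero]))
end
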